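/- The combined core-quotient map λ ↦ (core_r(λ), quot_r(λ)) is a bijection from the set of all partitions onto (set of r-cores) × (set of r-tuples of partitions). -/

import Mathlib

/-- A function `ℕ → ℕ` is (the sequence of parts of) a partition. -/
def IsPartitionFun (f : ℕ → ℕ) : Prop :=
  (∀ i j : ℕ, i ≤ j → f j ≤ f i) ∧ ∃ n : ℕ, ∀ i : ℕ, n ≤ i → f i = 0

/-- The number of `0`'s of an edge sequence lying above position `j`. -/
noncomputable def numZerosAbove (b : ℤ → Prop) (j : ℤ) : ℕ :=
  Nat.card {i : ℤ // j < i ∧ ¬ b i}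

/-- The shape of an edge sequence. -/
noncomputable def esShape (b : ℤ → Prop) (k : ℕ) : ℕ :=
  Nat.card {j : ℤ // b j ∧ k + 1 ≤ numZerosAbove b j}

/-- The charge of an edge sequence (the sorted sequence with `1`'s exactly at
positions `≥ m` has charge `-m`). -/
noncomputable def esCharge (b : ℤ → Prop) : ℤ :=
  (Nat.card {i : ℤ // i < 0 ∧ b i} : ℤ) - (Nat.card {i : ℤ // 0 ≤ i ∧ ¬ b i} : ℤ)

/-- The `j`-th part of the conjugate partition of `f` (`j ≥ 1`). -/
noncomputable def conjCount (f : ℕ → ℕ) (j : ℕ) : ℕ :=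
  Nat.card {i : ℕ // j ≤ f i}

/-- The partition `f` has a box of hook length `n`. -/
noncomputable def HasHook (f : ℕ → ℕ) (n : ℕ) : Prop :=
  ∃ a j : ℕ, 1 ≤ j ∧ j ≤ f a ∧ (f a - j) + (conjCount f j - (a + 1)) + 1 = n

/-- The canonical (total charge zero) edge sequence encoding of a partition `f`:
its `1`'s sit at the positions `k - f'_{k+1}` for `k ∈ ℕ`, where `f'` is the conjugate
partition of `f`. -/
def edgeOf (f : ℕ → ℕ) (i : ℤ) : Prop :=
  ∃ k : ℕ, i = (k : ℤ) - (conjCount f (k + 1) : ℤ)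

/-- The `r`-quotient of a partition: the tuple of shapes of the `r` runners of its
edge sequence, `bˢ j = b (r*j + s)`. -/
noncomputable def quotFun (r : ℕ) (f : ℕ → ℕ) (s : Fin r) : ℕ → ℕ :=
  fun k => esShape (fun j : ℤ => edgeOf f (r * j + (s : ℕ))) k

/-- The `r`-core of a partition: push all beads to the left in each runner of the
abacus (i.e. fully sort each runner, keeping its charge) and interleave back; the
core is the shape of the resulting edge sequence. -/
noncomputable def coreFun (r : ℕ) (f : ℕ → ℕ) : ℕ → ℕ :=
  fun k => esShape
    (fun i : ℤ => -(esCharge (fun j : ℤ => edgeOf f (r * j + i.emod r))) ≤ i.ediv r) k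

namespace CQ

def IsES (b : ℤ → Prop) : Prop :=
  ∃ N : ℤ, (∀ i, b i → -N ≤ i) ∧ (∀ i, ¬ b i → i < N)

noncomputable def onesBelow (b : ℤ → Prop) (j : ℤ) : ℕ := Set.ncard {i : ℤ | i < j ∧ b i}
noncomputable def zerosGe (b : ℤ → Prop) (j : ℤ) : ℕ := Set.ncard {i : ℤ | j ≤ i ∧ ¬ b i}

theorem finOnes {b : ℤ → Prop} (h : IsES b) (j : ℤ) : {i : ℤ | i < j ∧ b i}.Finite := by
  obtain ⟨N, h1, h2⟩ := h
  exact (Set.finite_Icc (-N) j).subset fun i hi => ⟨h1 i hi.2, hi.1.le⟩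

theorem finZeros {b : ℤ → Prop} (h : IsES b) (j : ℤ) : {i : ℤ | j ≤ i ∧ ¬ b i}.Finite := by
  obtain ⟨N, h1, h2⟩ := h
  exact (Set.finite_Icc j N).subset fun i hi => ⟨hi.1, (h2 i hi.2).le⟩

theorem ones_succ_pos {b : ℤ → Prop} (h : IsES b) {j : ℤ} (hj : b j) :
    onesBelow b (j + 1) = onesBelow b j + 1 := by
  unfold onesBelow
  rw [← Set.ncard_insert_of_notMem (a := j) (by simp) (finOnes h j)]
  congr 1
  ext i
  simp only [Set.mem_ofPred_eq, Set.mem_insert_iff]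
  constructor
  · rintro ⟨h1, h2⟩
    by_cases e : i = j
    · exact Or.inl e
    · exact Or.inr ⟨by omega, h2⟩
  · rintro (rfl | ⟨h1, h2⟩)
    · exact ⟨by omega, hj⟩
    · exact ⟨by omega, h2⟩

theorem ones_succ_neg {b : ℤ → Prop} {j : ℤ} (hj : ¬ b j) :
    onesBelow b (j + 1) = onesBelow b j := by
  unfold onesBelow
  congr 1
  ext i
  simp only [Set.mem_ofPred_eq]
  constructor
  · rintro ⟨h1, h2⟩
    refine ⟨?_, h2⟩
    have : i ≠ j := by rintro rfl; exact hj h2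
    omega
  · rintro ⟨h1, h2⟩
    exact ⟨by omega, h2⟩

theorem zeros_succ_pos {b : ℤ → Prop} {j : ℤ} (hj : b j) :
    zerosGe b (j + 1) = zerosGe b j := by
  unfold zerosGe
  congr 1
  ext i
  simp only [Set.mem_ofPred_eq]
  constructor
  · rintro ⟨h1, h2⟩
    exact ⟨by omega, h2⟩
  · rintro ⟨h1, h2⟩
    refine ⟨?_, h2⟩
    have : i ≠ j := by rintro rfl; exact h2 hj
    omega

theorem zeros_succ_neg {b : ℤ → Prop} (h : IsES b) {j : ℤ} (hj : ¬ b j) :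
    zerosGe b j = zerosGe b (j + 1) + 1 := by
  unfold zerosGe
  rw [← Set.ncard_insert_of_notMem (a := j) (by simp) (finZeros h (j+1))]
  congr 1
  ext i
  simp only [Set.mem_ofPred_eq, Set.mem_insert_iff]
  constructor
  · rintro ⟨h1, h2⟩
    by_cases e : i = j
    · exact Or.inl e
    · exact Or.inr ⟨by omega, h2⟩
  · rintro (rfl | ⟨h1, h2⟩)
    · exact ⟨by omega, hj⟩
    · exact ⟨by omega, h2⟩

theorem diff_succ {b : ℤ → Prop} (h : IsES b) (j : ℤ) :
    (onesBelow b (j+1) : ℤ) - zerosGe b (j+1) = onesBelow b j - zerosGe b j + 1 := by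
  by_cases hj : b j
  · rw [ones_succ_pos h hj, zeros_succ_pos hj]; push_cast; ring
  · rw [ones_succ_neg hj, zeros_succ_neg h hj]; push_cast; ring

theorem charge_eq (b : ℤ → Prop) : esCharge b = (onesBelow b 0 : ℤ) - zerosGe b 0 := rfl

theorem diff_eq {b : ℤ → Prop} (h : IsES b) (j : ℤ) :
    (onesBelow b j : ℤ) - zerosGe b j = esCharge b + j := by
  induction j using Int.induction_on with
  | zero => rw [charge_eq]; ring
  | succ i ih => rw [diff_succ h, ih]; ring
  | pred i ih =>
    have := diff_succ h (-(i:ℤ) - 1)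
    rw [sub_add_cancel, ih] at this
    linarith

theorem nza_eq {b : ℤ → Prop} {j : ℤ} (hj : b j) : numZerosAbove b j = zerosGe b j :=
  zeros_succ_pos hj

theorem zeros_anti {b : ℤ → Prop} (h : IsES b) {i j : ℤ} (hij : i ≤ j) :
    zerosGe b j ≤ zerosGe b i :=
  Set.ncard_le_ncard (fun _ hx => ⟨hij.trans hx.1, hx.2⟩) (finZeros h i)

/-- shape in terms of `zerosGe` -/
theorem shape_eq (b : ℤ → Prop) (k : ℕ) :
    esShape b k = Set.ncard {j : ℤ | b j ∧ k < zerosGe b j} := by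
  have : {j : ℤ | b j ∧ k < zerosGe b j} = {j : ℤ | b j ∧ k + 1 ≤ numZerosAbove b j} := by
    ext j
    simp only [Set.mem_ofPred_eq]
    constructor
    · rintro ⟨h1, h2⟩; exact ⟨h1, by rw [nza_eq h1]; exact h2⟩
    · rintro ⟨h1, h2⟩; exact ⟨h1, by rw [nza_eq h1] at h2; exact h2⟩
  rw [this]; rfl

theorem finShape {b : ℤ → Prop} (h : IsES b) (k : ℕ) :
    {j : ℤ | b j ∧ k < zerosGe b j}.Finite := by
  obtain ⟨N, h1, h2⟩ := h
  refine (Set.finite_Icc (-N) N).subset fun i hi => ⟨h1 i hi.1, ?_⟩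
  by_contra hc
  have : {j : ℤ | i ≤ j ∧ ¬ b j} = ∅ := by
    ext j
    simp only [Set.mem_ofPred_eq, Set.mem_empty_iff_false, iff_false]
    rintro ⟨h3, h4⟩
    have := h2 j h4
    omega
  have h5 := hi.2
  simp [zerosGe, this] at h5

theorem shape_part {b : ℤ → Prop} (h : IsES b) : IsPartitionFun (esShape b) := by
  refine ⟨fun i j hij => ?_, ?_⟩
  · rw [shape_eq, shape_eq]
    exact Set.ncard_le_ncard (fun x hx => ⟨hx.1, hij.trans_lt hx.2⟩) (finShape h i)
  · obtain ⟨N, h1, h2⟩ := id h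
    refine ⟨zerosGe b (-N), fun k hk => ?_⟩
    rw [shape_eq]
    convert Set.ncard_empty ℤ
    ext j
    simp only [Set.mem_ofPred_eq, Set.mem_empty_iff_false, iff_false]
    rintro ⟨h3, h4⟩
    have := zeros_anti h (h1 j h3)
    omega

theorem shape_gt_iff {b : ℤ → Prop} (h : IsES b) {p : ℤ} (hp : b p) (K : ℕ) :
    onesBelow b p < esShape b K ↔ K < zerosGe b p := by
  rw [shape_eq]
  constructor
  · intro h1
    by_contra hc
    refine absurd h1 (not_lt.2 (Set.ncard_le_ncard ?_ (finOnes h p)))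
    rintro x ⟨hx, hx'⟩
    refine ⟨?_, hx⟩
    by_contra hxp
    have := zeros_anti h (not_lt.1 hxp)
    omega
  · intro h1
    have : onesBelow b (p+1) ≤ Set.ncard {j : ℤ | b j ∧ K < zerosGe b j} := by
      refine Set.ncard_le_ncard ?_ (finShape h K)
      rintro x ⟨hx, hx'⟩
      exact ⟨hx', h1.trans_le (zeros_anti h (by omega))⟩
    rw [ones_succ_pos h hp] at this
    omega

theorem card_lt (n : ℕ) : Nat.card {i : ℕ // i < n} = n := by
  have : Nat.card {i : ℕ // i < n} = Nat.card (Fin n) := Nat.card_congr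
    ⟨fun x => ⟨x.1, x.2⟩, fun x => ⟨x.1, x.2⟩, fun _ => rfl, fun _ => rfl⟩
  simpa using this

theorem conj_shape {b : ℤ → Prop} (h : IsES b) {p : ℤ} (hp : b p) :
    conjCount (esShape b) (onesBelow b p + 1) = zerosGe b p := by
  unfold conjCount
  have : ∀ i, onesBelow b p + 1 ≤ esShape b i ↔ i < zerosGe b p := fun i =>
    shape_gt_iff h hp i
  simp only [this]
  exact card_lt _

theorem exists_one {b : ℤ → Prop} (h : IsES b) (k : ℕ) : ∃ p, b p ∧ onesBelow b p = k := by
  obtain ⟨N, h1, h2⟩ := id h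
  have h0 : onesBelow b (-N) = 0 := by
    unfold onesBelow
    convert Set.ncard_empty ℤ
    ext j
    simp only [Set.mem_ofPred_eq, Set.mem_empty_iff_false, iff_false]
    rintro ⟨h3, h4⟩
    have := h1 j h4
    omega
  have key : ∀ n : ℕ, k < onesBelow b (-N + n) → ∃ p, b p ∧ onesBelow b p = k := by
    intro n
    induction n with
    | zero => intro hk; simp [h0] at hk
    | succ n ih =>
      intro hk
      rw [Nat.cast_succ, ← add_assoc] at hk
      by_cases hb : b (-N + n)
      · rw [ones_succ_pos h hb] at hk
        by_cases e : onesBelow b (-N + n) = k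
        · exact ⟨_, hb, e⟩
        · exact ih (by omega)
      · rw [ones_succ_neg hb] at hk
        exact ih hk
  refine key (N - esCharge b + k + 1).toNat ?_
  have := diff_eq h (-N + ((N - esCharge b + k + 1).toNat : ℤ))
  omega

theorem edge_shape {b : ℤ → Prop} (h : IsES b) (i : ℤ) :
    edgeOf (esShape b) (i + esCharge b) ↔ b i := by
  constructor
  · rintro ⟨k, hk⟩
    obtain ⟨p, hp, rfl⟩ := exists_one h k
    rw [conj_shape h hp, diff_eq h] at hk
    have : i = p := by linarith
    rwa [this]
  · intro hi
    refine ⟨onesBelow b i, ?_⟩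
    rw [conj_shape h hi, diff_eq h]
    ring

theorem galois {f : ℕ → ℕ} (h : IsPartitionFun f) (k a : ℕ) :
    k < f a ↔ a < conjCount f (k + 1) := by
  obtain ⟨h1, n, h2⟩ := h
  have hex : ∃ a, f a ≤ k := ⟨n, by rw [h2 n le_rfl]; omega⟩
  classical
  have hm : ∀ a, k + 1 ≤ f a ↔ a < Nat.find hex := by
    intro a
    constructor
    · intro ha
      by_contra hc
      have := h1 _ _ (not_lt.1 hc)
      have := Nat.find_spec hex
      omega
    · intro ha
      have := Nat.find_min hex ha
      omega
  have : conjCount f (k+1) = Nat.find hex := by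
    unfold conjCount
    simp only [hm]
    exact card_lt _
  rw [this]
  exact hm a

noncomputable def pos (f : ℕ → ℕ) (k : ℕ) : ℤ := (k : ℤ) - (conjCount f (k + 1) : ℤ)

theorem pos_strict {f : ℕ → ℕ} (h : IsPartitionFun f) : StrictMono (pos f) := by
  apply strictMono_nat_of_lt_succ
  intro k
  unfold pos
  have : conjCount f (k + 1 + 1) ≤ conjCount f (k + 1) := by
    by_contra hc
    have h1 := (galois h (k+1) _).2 (not_le.1 hc)
    have h2 := (galois h k (conjCount f (k+1))).not.2 (lt_irrefl _)
    omega
  push_cast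
  omega

theorem pos_big {f : ℕ → ℕ} (h : IsPartitionFun f) {k : ℕ} (hk : f 0 ≤ k) : pos f k = k := by
  have := galois h k 0
  unfold pos
  omega

theorem edge_pos (f : ℕ → ℕ) (k : ℕ) : edgeOf f (pos f k) := ⟨k, rfl⟩

theorem edge_ES {f : ℕ → ℕ} (h : IsPartitionFun f) : IsES (edgeOf f) := by
  refine ⟨conjCount f 1 + f 0, ?_, ?_⟩
  · rintro _ ⟨k, rfl⟩
    have := (pos_strict h).monotone (Nat.zero_le k)
    simp only [pos, zero_add, Nat.cast_zero] at this
    omega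
  · intro i hi
    by_contra hc
    apply hi
    lift i to ℕ using by omega
    rw [← pos_big h (k := i) (by omega)]
    exact edge_pos f i

theorem ones_edge {f : ℕ → ℕ} (h : IsPartitionFun f) (k : ℕ) :
    onesBelow (edgeOf f) (pos f k) = k := by
  have : {i : ℤ | i < pos f k ∧ edgeOf f i} = pos f '' {i | i < k} := by
    ext i
    simp only [Set.mem_ofPred_eq, Set.mem_image]
    constructor
    · rintro ⟨h1, l, rfl⟩
      exact ⟨l, (pos_strict h).lt_iff_lt.1 h1, rfl⟩
    · rintro ⟨l, h1, rfl⟩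
      exact ⟨(pos_strict h).lt_iff_lt.2 h1, edge_pos f l⟩
  unfold onesBelow
  rw [this, Set.ncard_image_of_injective _ (pos_strict h).injective]
  exact card_lt k

theorem charge_edge {f : ℕ → ℕ} (h : IsPartitionFun f) : esCharge (edgeOf f) = 0 := by
  have h1 := diff_eq (edge_ES h) (pos f (f 0))
  rw [ones_edge h, pos_big h le_rfl] at h1
  have : zerosGe (edgeOf f) (f 0) = 0 := by
    unfold zerosGe
    convert Set.ncard_empty ℤ
    ext j
    simp only [Set.mem_ofPred_eq, Set.mem_empty_iff_false, iff_false, not_and, not_not]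
    intro hj
    lift j to ℕ using by omega
    rw [← pos_big h (k := j) (by omega)]
    exact edge_pos f j
  rw [this] at h1
  push_cast at h1
  linarith

theorem zeros_edge {f : ℕ → ℕ} (h : IsPartitionFun f) (k : ℕ) :
    zerosGe (edgeOf f) (pos f k) = conjCount f (k+1) := by
  have h1 := diff_eq (edge_ES h) (pos f k)
  rw [ones_edge h, charge_edge h] at h1
  unfold pos at h1 ⊢
  omega

theorem shape_edge {f : ℕ → ℕ} (h : IsPartitionFun f) : esShape (edgeOf f) = f := by
  funext K
  rw [shape_eq]
  have : {j : ℤ | edgeOf f j ∧ K < zerosGe (edgeOf f) j} = pos f '' {k | k < f K} := by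
    ext i
    simp only [Set.mem_ofPred_eq, Set.mem_image]
    constructor
    · rintro ⟨⟨l, rfl⟩, h1⟩
      have h2 := zeros_edge h l
      rw [pos] at h2
      rw [h2] at h1
      exact ⟨l, (galois h _ _).2 h1, rfl⟩
    · rintro ⟨l, h1, rfl⟩
      refine ⟨edge_pos f l, ?_⟩
      rw [zeros_edge h]
      exact (galois h _ _).1 h1
  rw [this, Set.ncard_image_of_injective _ (pos_strict h).injective]
  exact card_lt _

theorem edge_shape0 {b : ℤ → Prop} (h : IsES b) (h0 : esCharge b = 0) :
    edgeOf (esShape b) = b := by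
  funext i
  have := edge_shape h i
  rw [h0, add_zero] at this
  exact propext this

theorem zero_edge {f : ℕ → ℕ} (h : IsPartitionFun f) (a : ℕ) :
    ¬ edgeOf f ((f a : ℤ) - a - 1) := by
  rintro ⟨k, hk⟩
  have := galois h k a
  omega

theorem zero_edge' {f : ℕ → ℕ} (h : IsPartitionFun f) (z : ℤ) (hz : ¬ edgeOf f z) :
    ∃ a : ℕ, z = (f a : ℤ) - a - 1 := by
  have hex : ∃ k, z < pos f k := by
    refine ⟨f 0 + (z + 1).toNat, ?_⟩
    rw [pos_big h (by omega)]
    push_cast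
    omega
  classical
  obtain ⟨k, hk, hm⟩ : ∃ k, z < pos f k ∧ ∀ l < k, ¬ z < pos f l :=
    ⟨Nat.find hex, Nat.find_spec hex, fun l hl => Nat.find_min hex hl⟩
  unfold pos at hk
  obtain ⟨a, ha⟩ : ∃ a : ℕ, (a : ℤ) = k - 1 - z := ⟨(k - 1 - z).toNat, by omega⟩
  refine ⟨a, ?_⟩
  have h1 := galois h k a
  rcases k with _ | k
  · push_cast at *
    omega
  · have h2 := galois h k a
    have h3 := hm k (by omega)
    have h4 : z ≠ pos f k := by rintro rfl; exact hz (edge_pos f k)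
    unfold pos at h3 h4
    push_cast at *
    omega

theorem hook_iff {f : ℕ → ℕ} (h : IsPartitionFun f) {r : ℕ} (hr : 1 ≤ r) :
    HasHook f r ↔ ∃ i, edgeOf f i ∧ ¬ edgeOf f (i + r) := by
  constructor
  · rintro ⟨a, j, h1, h2, h3⟩
    obtain ⟨k, rfl⟩ : ∃ k, j = k + 1 := ⟨j - 1, by omega⟩
    refine ⟨pos f k, edge_pos f k, ?_⟩
    have := galois h k a
    have e : pos f k + (r : ℤ) = (f a : ℤ) - a - 1 := by
      unfold pos
      omega
    rw [e]
    exact zero_edge h a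
  · rintro ⟨i, ⟨k, rfl⟩, h2⟩
    obtain ⟨a, ha⟩ := zero_edge' h _ h2
    have := galois h k a
    exact ⟨a, k + 1, by omega, by omega, by omega⟩


theorem nza_shift (b : ℤ → Prop) (c j : ℤ) :
    numZerosAbove (fun i => b (i + c)) j = numZerosAbove b (j + c) :=
  Nat.card_congr ((Equiv.addRight c).subtypeEquiv fun a => by simp)

theorem shape_shift (b : ℤ → Prop) (c : ℤ) : esShape (fun i => b (i + c)) = esShape b := by
  funext k
  exact Nat.card_congr ((Equiv.addRight c).subtypeEquiv fun a => by simp [nza_shift])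

theorem charge_shift {b : ℤ → Prop} (h : IsES b) (c : ℤ) :
    esCharge (fun i => b (i + c)) = esCharge b + c := by
  rw [← diff_eq h c]
  have h1 : Nat.card {i : ℤ // i < 0 ∧ b (i + c)} = onesBelow b c :=
    Nat.card_congr ((Equiv.addRight c).subtypeEquiv fun a => by simp)
  have h2 : Nat.card {i : ℤ // 0 ≤ i ∧ ¬ b (i + c)} = zerosGe b c :=
    Nat.card_congr ((Equiv.addRight c).subtypeEquiv fun a => by simp)
  unfold esCharge
  rw [h1, h2]

theorem sorted_ES (m : ℤ) : IsES (fun j => m ≤ j) := by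
  refine ⟨|m|, fun i hi => ?_, fun i hi => ?_⟩
  · have := neg_abs_le m
    omega
  · have := le_abs_self m
    omega

theorem sorted_charge (m : ℤ) : esCharge (fun j => m ≤ j) = -m := by
  have h := diff_eq (sorted_ES m) m
  have h1 : onesBelow (fun j => m ≤ j) m = 0 := by
    unfold onesBelow
    convert Set.ncard_empty ℤ
    ext j
    simp
  have h2 : zerosGe (fun j => m ≤ j) m = 0 := by
    unfold zerosGe
    convert Set.ncard_empty ℤ
    ext j
    simp
  rw [h1, h2] at h
  push_cast at h
  linarith

theorem mono_sorted {b : ℤ → Prop} (h : IsES b) (hm : ∀ i, b i → b (i + 1)) (j : ℤ) :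
    b j ↔ -esCharge b ≤ j := by
  have hm' : ∀ i, b i → ∀ j, i ≤ j → b j := by
    intro i hi j hij
    induction j, hij using Int.le_induction with
    | base => exact hi
    | succ n _ ih => exact hm _ ih
  obtain ⟨p, hp, h0⟩ := exists_one h 0
  have hz : zerosGe b p = 0 := by
    unfold zerosGe
    convert Set.ncard_empty ℤ
    ext j
    simp only [Set.mem_ofPred_eq, Set.mem_empty_iff_false, iff_false, not_and, not_not]
    exact hm' p hp j
  have hd := diff_eq h p
  rw [h0, hz] at hd
  push_cast at hd
  have e : -esCharge b = p := by linarith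
  rw [e]
  constructor
  · intro hj
    by_contra hc
    have := (Set.ncard_eq_zero (finOnes h p)).1 h0
    exact Set.eq_empty_iff_forall_notMem.1 this j ⟨not_le.1 hc, hj⟩
  · exact hm' p hp j


theorem runner_div {r : ℕ} (hr : 1 ≤ r) (j : ℤ) (s : Fin r) : ((r:ℤ) * j + (s:ℕ)) / r = j := by
  have := s.2
  rw [add_comm, Int.add_mul_ediv_left _ _ (by omega), Int.ediv_eq_zero_of_lt (by omega) (by omega)]
  ring

theorem runner_mod {r : ℕ} (j : ℤ) (s : Fin r) :
    ((r:ℤ) * j + (s:ℕ)) % r = (s:ℕ) := by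
  have := s.2
  rw [add_comm, Int.add_mul_emod_self_left, Int.emod_eq_of_lt (by omega) (by omega)]

theorem runner_ex {r : ℕ} (hr : 1 ≤ r) (i : ℤ) :
    ∃ (j : ℤ) (s : Fin r), i = r * j + (s:ℕ) := by
  have h1 := Int.emod_nonneg i (b := r) (by omega)
  have h2 := Int.emod_lt_of_pos i (b := r) (by omega)
  refine ⟨i / r, ⟨(i % r).toNat, by omega⟩, ?_⟩
  have := Int.mul_ediv_add_emod i r
  simp only [Int.toNat_of_nonneg h1]
  omega

theorem card_runner {r : ℕ} (hr : 1 ≤ r) (P : ℤ → Prop) (hP : {i | P i}.Finite) :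
    Nat.card {i // P i} = ∑ s : Fin r, Nat.card {j : ℤ // P (r * j + (s:ℕ))} := by
  have hfin : ∀ s : Fin r, Finite {j : ℤ // P (r * j + (s:ℕ))} := by
    intro s
    have : Finite {i // P i} := hP
    refine Finite.of_injective (β := {i // P i}) (fun x => ⟨_, x.2⟩) ?_
    rintro ⟨x, hx⟩ ⟨y, hy⟩ hxy
    simp only [Subtype.mk.injEq] at hxy ⊢
    rw [← runner_div hr x s, hxy, runner_div hr]
  rw [← Nat.card_sigma]
  refine (Nat.card_congr (Equiv.ofBijective
    (fun x : (s : Fin r) × {j : ℤ // P (r * j + (s:ℕ))} => (⟨_, x.2.2⟩ : {i // P i})) ⟨?_, ?_⟩)).symm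
  · rintro ⟨s, x, hx⟩ ⟨t, y, hy⟩ hxy
    simp only [Subtype.mk.injEq] at hxy
    have h1 : x = y := by rw [← runner_div hr x s, hxy, runner_div hr]
    have h2 : s = t := by
      have := runner_mod x s
      rw [hxy, runner_mod] at this
      apply Fin.ext
      exact_mod_cast this.symm
    subst h1 h2
    rfl
  · rintro ⟨i, hi⟩
    obtain ⟨j, s, rfl⟩ := runner_ex hr i
    exact ⟨⟨s, j, hi⟩, rfl⟩

theorem runner_lt {r : ℕ} (j : ℤ) (s : Fin r) : (r:ℤ) * j + (s:ℕ) < 0 ↔ j < 0 := by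
  have := s.2
  constructor
  · intro h
    by_contra hc
    have : 0 ≤ (r:ℤ) * j := by
      apply mul_nonneg <;> omega
    omega
  · intro h
    have : (r:ℤ) * j ≤ r * (-1) := by
      apply mul_le_mul_of_nonneg_left <;> omega
    omega

theorem charge_runner {r : ℕ} (hr : 1 ≤ r) {b : ℤ → Prop} (h : IsES b) :
    esCharge b = ∑ s : Fin r, esCharge (fun j => b (r * j + (s:ℕ))) := by
  unfold esCharge
  rw [card_runner hr _ (finOnes h 0), card_runner hr _ (finZeros h 0), Finset.sum_sub_distrib]
  push_cast
  simp only [runner_lt, ← not_lt]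

theorem runner_ES {r : ℕ} (hr : 1 ≤ r) {b : ℤ → Prop} (h : IsES b) (s : Fin r) :
    IsES (fun j => b (r * j + (s:ℕ))) := by
  obtain ⟨N, h1, h2⟩ := h
  have hs := s.2
  refine ⟨|N| + 1, fun j hj => ?_, fun j hj => ?_⟩
  · have a1 := h1 _ hj
    by_contra hc
    have a2 : (r:ℤ) * (j + 1) ≤ 1 * (j + 1) :=
      mul_le_mul_of_nonpos_right (by omega) (by have := abs_nonneg N; omega)
    have := le_abs_self N
    have : (r:ℤ) * (j + 1) = r * j + r := by ring
    omega
  · have a1 := h2 _ hj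
    by_contra hc
    have a2 : 1 * j ≤ (r:ℤ) * j :=
      mul_le_mul_of_nonneg_right (by omega) (by have := abs_nonneg N; omega)
    have := le_abs_self N
    omega

theorem ES_of_runner {r : ℕ} (hr : 1 ≤ r) {b : ℤ → Prop}
    (h : ∀ s : Fin r, IsES (fun j => b (r * j + (s:ℕ)))) : IsES b := by
  choose N h1 h2 using h
  have hM : ∀ s, N s ≤ ∑ t, |N t| := fun s => (le_abs_self _).trans
    (Finset.single_le_sum (f := fun t => |N t|) (fun t _ => abs_nonneg _) (Finset.mem_univ s))
  have hM0 : 0 ≤ ∑ t, |N t| := Finset.sum_nonneg fun t _ => abs_nonneg _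
  generalize ∑ t, |N t| = M at hM hM0
  refine ⟨r * M + r, fun i hi => ?_, fun i hi => ?_⟩
  · obtain ⟨j, s, rfl⟩ := runner_ex hr i
    have a := h1 s j hi
    have a' := hM s
    have : (r:ℤ) * (-M) ≤ r * j := mul_le_mul_of_nonneg_left (by omega) (by omega)
    have : (r:ℤ) * (-M) = - (r * M) := by ring
    omega
  · obtain ⟨j, s, rfl⟩ := runner_ex hr i
    have hs := s.2
    have a := h2 s j hi
    have a' := hM s
    have : (r:ℤ) * j ≤ r * M := mul_le_mul_of_nonneg_left (by omega) (by omega)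
    omega

/-- The sorted edge sequence. -/
def srt (r : ℕ) (b : ℤ → Prop) (i : ℤ) : Prop :=
  -(esCharge (fun j : ℤ => b (r * j + i.emod r))) ≤ i.ediv r

theorem core_eq (r : ℕ) (f : ℕ → ℕ) : coreFun r f = esShape (srt r (edgeOf f)) := rfl

theorem srt_runner {r : ℕ} (hr : 1 ≤ r) (b : ℤ → Prop) (s : Fin r) :
    (fun j => srt r b (r * j + (s:ℕ))) =
      fun j => -(esCharge (fun j : ℤ => b (r * j + (s:ℕ)))) ≤ j := by
  funext j
  have h1 : Int.emod ((r:ℤ) * j + (s:ℕ)) r = (s:ℕ) := runner_mod j s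
  have h2 : Int.ediv ((r:ℤ) * j + (s:ℕ)) r = j := runner_div hr j s
  unfold srt
  rw [h1, h2]

theorem srt_ES {r : ℕ} (hr : 1 ≤ r) (b : ℤ → Prop) : IsES (srt r b) := by
  apply ES_of_runner hr
  intro s
  rw [srt_runner hr]
  exact sorted_ES _

theorem srt_charge {r : ℕ} (hr : 1 ≤ r) {b : ℤ → Prop} (h : IsES b) :
    esCharge (srt r b) = esCharge b := by
  rw [charge_runner hr (srt_ES hr b), charge_runner hr h]
  refine Finset.sum_congr rfl fun s _ => ?_
  rw [srt_runner hr, sorted_charge, neg_neg]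

theorem edge_core {r : ℕ} (hr : 1 ≤ r) {f : ℕ → ℕ} (h : IsPartitionFun f) :
    edgeOf (coreFun r f) = srt r (edgeOf f) := by
  rw [core_eq]
  exact edge_shape0 (srt_ES hr _) (by rw [srt_charge hr (edge_ES h), charge_edge h])

theorem ext_runner {r : ℕ} (hr : 1 ≤ r) {b b' : ℤ → Prop}
    (h : ∀ s : Fin r, (fun j : ℤ => b (r * j + (s:ℕ))) = fun j : ℤ => b' (r * j + (s:ℕ))) :
    b = b' := by
  funext i
  obtain ⟨j, s, rfl⟩ := runner_ex hr i
  exact congrFun (h s) j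

theorem ES_ext {b b' : ℤ → Prop} (h : IsES b) (h' : IsES b') (hs : esShape b = esShape b')
    (hc : esCharge b = esCharge b') : b = b' := by
  funext i
  rw [← edge_shape h i, ← edge_shape h' i, hs, hc]

theorem nonempty_build {r : ℕ} (hr : 1 ≤ r) (B : Fin r → ℤ → Prop) :
    ∃ b : ℤ → Prop, ∀ s : Fin r, (fun j : ℤ => b (r * j + (s:ℕ))) = B s := by
  refine ⟨fun i => ∃ s : Fin r, i % r = (s:ℕ) ∧ B s (i / r), fun s => ?_⟩
  funext j
  simp only [runner_div hr, runner_mod]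
  apply propext
  constructor
  · rintro ⟨t, ht, h⟩
    have : s = t := Fin.ext (by exact_mod_cast ht)
    rwa [this]
  · intro h
    exact ⟨s, rfl, h⟩

end CQ

/-- The combined core-quotient map `λ ↦ (core_r λ, quot_r λ)` is a
bijection from the set of all partitions onto
`(set of r-cores) × (set of r-tuples of partitions)`. -/
theorem stmt4 (r : ℕ) (hr : 1 ≤ r) :
    Set.BijOn (fun f : ℕ → ℕ => (coreFun r f, quotFun r f))
      {f : ℕ → ℕ | IsPartitionFun f}
      {p : (ℕ → ℕ) × (Fin r → ℕ → ℕ) |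
        IsPartitionFun p.1 ∧ ¬ HasHook p.1 r ∧ ∀ s : Fin r, IsPartitionFun (p.2 s)} := by
  refine ⟨?_, ?_, ?_⟩
  · intro f hf
    have hf' : IsPartitionFun f := hf
    have hp : IsPartitionFun (coreFun r f) := CQ.shape_part (CQ.srt_ES hr _)
    refine ⟨hp, ?_, fun s => CQ.shape_part (CQ.runner_ES hr (CQ.edge_ES hf') s)⟩
    change ¬ HasHook (coreFun r f) r
    rw [CQ.hook_iff hp hr, CQ.edge_core hr hf']
    rintro ⟨i, h1, h2⟩
    apply h2
    obtain ⟨j, s, rfl⟩ := CQ.runner_ex hr i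
    have e := CQ.srt_runner hr (edgeOf f) s
    have e1 := congrFun e j
    have e2 := congrFun e (j + 1)
    rw [e1] at h1
    rw [show (r:ℤ) * j + (s:ℕ) + r = r * (j + 1) + (s:ℕ) by ring, e2]
    omega
  · intro f hf g hg hfg
    have hf' : IsPartitionFun f := hf
    have hg' : IsPartitionFun g := hg
    simp only [Prod.mk.injEq] at hfg
    obtain ⟨hc, hq⟩ := hfg
    have he : CQ.srt r (edgeOf f) = CQ.srt r (edgeOf g) := by
      rw [← CQ.edge_core hr hf', ← CQ.edge_core hr hg', hc]
    have : edgeOf f = edgeOf g := by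
      apply CQ.ext_runner hr
      intro s
      apply CQ.ES_ext (CQ.runner_ES hr (CQ.edge_ES hf') s) (CQ.runner_ES hr (CQ.edge_ES hg') s)
      · exact congrFun hq s
      · have e1 := CQ.srt_runner hr (edgeOf f) s
        rw [he, CQ.srt_runner hr] at e1
        have e2 := congrArg esCharge e1
        rw [CQ.sorted_charge, CQ.sorted_charge] at e2
        linarith
    rw [← CQ.shape_edge hf', this, CQ.shape_edge hg']
  · rintro ⟨g, q⟩ ⟨hg, hh, hq⟩
    change IsPartitionFun g at hg
    change ¬ HasHook g r at hh
    change ∀ s, IsPartitionFun (q s) at hq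
    rw [CQ.hook_iff hg hr] at hh
    push Not at hh
    have hsg : CQ.srt r (edgeOf g) = edgeOf g := by
      apply CQ.ext_runner hr
      intro s
      rw [CQ.srt_runner hr]
      funext j
      refine propext (CQ.mono_sorted (CQ.runner_ES hr (CQ.edge_ES hg) s) ?_ j).symm
      intro i hi
      have := hh _ hi
      rwa [show (r:ℤ) * i + (s:ℕ) + r = r * (i + 1) + (s:ℕ) by ring] at this
    obtain ⟨b, hb⟩ := CQ.nonempty_build hr (fun (s : Fin r) (j : ℤ) =>
      edgeOf (q s) (j + esCharge (fun j => edgeOf g (r * j + (s:ℕ)))))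
    have hch : ∀ s : Fin r, esCharge (fun j => b (r * j + (s:ℕ))) =
        esCharge (fun j => edgeOf g (r * j + (s:ℕ))) := by
      intro s
      rw [hb, CQ.charge_shift (CQ.edge_ES (hq s)), CQ.charge_edge (hq s), zero_add]
    have hbES : CQ.IsES b := by
      apply CQ.ES_of_runner hr
      intro s
      rw [hb]
      obtain ⟨N, h1, h2⟩ := CQ.edge_ES (hq s)
      generalize esCharge (fun j => edgeOf g (r * j + (s:ℕ))) = c
      have a1 := le_abs_self c
      have a2 := neg_abs_le c
      refine ⟨N + |c|, fun i hi => ?_, fun i hi => ?_⟩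
      · have := h1 _ hi
        omega
      · have := h2 _ hi
        omega
    have hb0 : esCharge b = 0 := by
      rw [CQ.charge_runner hr hbES, Finset.sum_congr rfl fun s _ => hch s,
        ← CQ.charge_runner hr (CQ.edge_ES hg), CQ.charge_edge hg]
    have hE : edgeOf (esShape b) = b := CQ.edge_shape0 hbES hb0
    refine ⟨esShape b, CQ.shape_part hbES, ?_⟩
    simp only [Prod.mk.injEq]
    constructor
    · rw [CQ.core_eq, hE]
      have : CQ.srt r b = CQ.srt r (edgeOf g) := by
        apply CQ.ext_runner hr
        intro s
        rw [CQ.srt_runner hr, CQ.srt_runner hr, hch]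
      rw [this, hsg, CQ.shape_edge hg]
    · funext s
      change esShape (fun j : ℤ => edgeOf (esShape b) (r * j + (s:ℕ))) = q s
      rw [hE, hb, CQ.shape_shift, CQ.shape_edge (hq s)]
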